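/- arXiv:2102.06538 — 2 statements merged into one kernel-verified Lean document; each statement's English description precedes it below -/
import Mathlib

section
/- Let W be a suitable basis and U an integral basis of A with W = TU for T ∈ K[x]^{n×n}. Let e ∈ K[x] (squarefree) with eW′ = MW, gcd(e, entries of M) = 1, and e_u ∈ K[x] with e_u U′ = M_u U, gcd(e_u, entries of M_u) = 1. Then the set of roots of e in K̄ equals the union of the set of roots of det(T) and the set of roots of e_u; equivalently, e is (up to a unit) the squarefree part of the product det(T)·e_u. -/
noncomputable section
open scoped Classical

open Polynomial

/-- Termwise derivative (w.r.t. `x`) of a generalized (Hahn/Puiseux) series in `x - a`: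
the exponent-`q` coefficient of `P'` is `(q+1)` times the exponent-`(q+1)` coefficient of `P`. -/
def hderiv {F : Type} [Field F] (P : HahnSeries ℚ F) : HahnSeries ℚ F where
  coeff q := ((q + 1 : ℚ) : F) * P.coeff (q + 1)
  isPWO_support' := by
    have hsub : (Function.support fun q : ℚ => ((q + 1 : ℚ) : F) * P.coeff (q + 1))
        ⊆ (fun q : ℚ => q - 1) '' P.support := by
      intro q hq
      refine ⟨q + 1, ?_, by ring⟩
      intro h0
      simp [Function.mem_support, h0] at hq
    exact (P.isPWO_support.image_of_monotoneOn
      (fun x _ y _ hxy => by simpa using hxy)).mono hsub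

/-- The valuation of a generalized (Hahn/Puiseux) series: the least exponent occurring,
and `⊤` for the zero series. -/
def hval {F : Type} [Field F] (P : HahnSeries ℚ F) : WithTop ℚ :=
  if h : P = 0 then ⊤
  else ((P.isWF_support.min (HahnSeries.support_nonempty_iff.mpr h) : ℚ) : WithTop ℚ)

/-- A series is ramified if some exponent in its support is not an integer. -/
def Ramified {F : Type} [Field F] (P : HahnSeries ℚ F) : Prop :=
  ∃ q ∈ P.support, ∀ z : ℤ, (z : ℚ) ≠ q

/-- The set of fractional (non-integer) exponents occurring in a series. -/
def fracSupport {F : Type} [Field F] (P : HahnSeries ℚ F) : Set ℚ :=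
  {q | q ∈ P.support ∧ ∀ z : ℤ, (z : ℚ) ≠ q}

/-- The minimal fractional exponent `δ(P)` of a series; `⊤` if `P` is not ramified. -/
def delta {F : Type} [Field F] (P : HahnSeries ℚ F) : WithTop ℚ :=
  if h : (fracSupport P).Nonempty then
    (((P.isWF_support.mono (fun q hq => hq.1)).min h : ℚ) : WithTop ℚ)
  else ⊤

/-- A Hahn series over `ℚ` is a Puiseux series if its exponents have a common denominator. -/
def IsPuiseux {F : Type} [Field F] (P : HahnSeries ℚ F) : Prop :=
  ∃ r : ℕ, 0 < r ∧ ∀ q ∈ P.support, ∃ z : ℤ, (z : ℚ) / r = q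

/-! ### The algebraic function field `A = K(x)[y]/⟨m⟩` -/

/-- The canonical image in `A = K(x)[y]/⟨m⟩` of a polynomial `p ∈ K[x]`. -/
def toA {K : Type} [Field K] (m : Polynomial (RatFunc K)) (p : Polynomial K) :
    AdjoinRoot m :=
  algebraMap (RatFunc K) (AdjoinRoot m) (algebraMap (Polynomial K) (RatFunc K) p)

/-- `D` is the derivation on `A = K(x)[y]/⟨m⟩` extending `d/dx` on `K(x)`:
it is additive, satisfies the Leibniz rule, and restricts to `d/dx` on `K[x]`
(hence, being a derivation on a field, on all of `K(x)`). -/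
structure IsDerivationOnA {K : Type} [Field K] (m : Polynomial (RatFunc K))
    (D : AdjoinRoot m → AdjoinRoot m) : Prop where
  map_add : ∀ f g, D (f + g) = D f + D g
  leibniz : ∀ f g, D (f * g) = f * D g + g * D f
  map_poly : ∀ p : Polynomial K, D (toA m p) = toA m (Polynomial.derivative p)

/-- `W` is a basis of `A` as a vector space over `K(x)`. -/
def IsKxBasis {K : Type} [Field K] {m : Polynomial (RatFunc K)}
    (W : Fin m.natDegree → AdjoinRoot m) : Prop :=
  LinearIndependent (RatFunc K) W ∧ Submodule.span (RatFunc K) (Set.range W) = ⊤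

/-- `e W′ = M W` componentwise. -/
def DerivRel {K : Type} [Field K] {m : Polynomial (RatFunc K)}
    (D : AdjoinRoot m → AdjoinRoot m) (W : Fin m.natDegree → AdjoinRoot m)
    (e : Polynomial K) (M : Matrix (Fin m.natDegree) (Fin m.natDegree) (Polynomial K)) : Prop :=
  ∀ i, toA m e * D (W i) = ∑ j, toA m (M i j) * W j

/-- `gcd(e, m₁₁, …, mₙₙ) = 1`: the only common divisors of `e` and the entries of `M`
are units. -/
def GcdOne {K : Type} [Field K] {n : ℕ}
    (e : Polynomial K) (M : Matrix (Fin n) (Fin n) (Polynomial K)) : Prop :=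
  ∀ p : Polynomial K, p ∣ e → (∀ i j, p ∣ M i j) → IsUnit p

/-! ### Puiseux expansions around a point `a` of the algebraic closure -/

/-- The family of the `n` distinct `K(x)`-embeddings of `A = K(x)[y]/⟨m⟩` into the field of
Puiseux series around a point `a`: each embedding is a ring homomorphism into the Hahn series
field whose values are Puiseux series, sending constants `c ∈ K` to constant series and the
rational function `x` to `a + (x - a)`, i.e. to the series `a + t` where `t` stands
for `x - a`. -/
structure EmbFamily (K F : Type) [Field K] [Field F] [Algebra K F]
    (m : Polynomial (RatFunc K)) (a : F) where
  emb : Fin m.natDegree → (AdjoinRoot m →+* HahnSeries ℚ F)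
  emb_injective : Function.Injective emb
  emb_C : ∀ i (c : K), emb i (toA m (Polynomial.C c)) = HahnSeries.single 0 (algebraMap K F c)
  emb_X : ∀ i, emb i (toA m Polynomial.X) =
    HahnSeries.single 0 a + HahnSeries.single 1 1
  emb_puiseux : ∀ i f, IsPuiseux (emb i f)

/-- The embeddings around `a` are differential homomorphisms: they intertwine the derivation
`D` on `A` with the termwise derivative of series. -/
def IsDiffFamily {K F : Type} [Field K] [Field F] [Algebra K F]
    {m : Polynomial (RatFunc K)} {a : F} (D : AdjoinRoot m → AdjoinRoot m)
    (σ : EmbFamily K F m a) : Prop :=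
  ∀ i f, σ.emb i (D f) = hderiv (σ.emb i f)

/-- `f ∈ A` is locally integral at `a`, i.e. `val_a(f) ≥ 0`: all Puiseux series associated
to `f` around `a` have nonnegative valuation. -/
def LocIntegralAt {K F : Type} [Field K] [Field F] [Algebra K F]
    {m : Polynomial (RatFunc K)} {a : F} (σ : EmbFamily K F m a)
    (f : AdjoinRoot m) : Prop :=
  ∀ i, 0 ≤ hval (σ.emb i f)

/-- `a` is a branch point of `f ∈ A`: one of the Puiseux series associated to `f` around `a`
is ramified. -/
def IsBranchPointOf {K F : Type} [Field K] [Field F] [Algebra K F]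
    {m : Polynomial (RatFunc K)} {a : F} (σ : EmbFamily K F m a)
    (f : AdjoinRoot m) : Prop :=
  ∃ i, Ramified (σ.emb i f)

/-- `f ∈ A` is (globally) integral: locally integral at every point `a` of the algebraic
closure of `K` (given the system `σ` of Puiseux expansions around each point). -/
def IntegralElem {K : Type} [Field K] {m : Polynomial (RatFunc K)}
    (σ : ∀ a : AlgebraicClosure K, EmbFamily K (AlgebraicClosure K) m a)
    (f : AdjoinRoot m) : Prop :=
  ∀ a, LocIntegralAt (σ a) f

/-- `W` is an integral basis of `A`: a `K(x)`-vector-space basis consisting of integral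
elements such that every integral element is a `K[x]`-linear combination of `W`. -/
def IsIntegralBasis {K : Type} [Field K] {m : Polynomial (RatFunc K)}
    (σ : ∀ a : AlgebraicClosure K, EmbFamily K (AlgebraicClosure K) m a)
    (W : Fin m.natDegree → AdjoinRoot m) : Prop :=
  IsKxBasis W ∧ (∀ i, IntegralElem σ (W i)) ∧
    ∀ f, IntegralElem σ f → ∃ c : Fin m.natDegree → Polynomial K,
      f = ∑ i, toA m (c i) * W i

/-- The rational function `r ∈ K(x)` has no pole at `a`: `r = p/q` with `q(a) ≠ 0`. -/
def NoPoleAt {K F : Type} [Field K] [Field F] [Algebra K F] (a : F) (r : RatFunc K) : Prop :=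
  ∃ p q : Polynomial K, Polynomial.aeval a q ≠ 0 ∧
    r * algebraMap (Polynomial K) (RatFunc K) q = algebraMap (Polynomial K) (RatFunc K) p

/-- `W` is a local integral basis of `A` at `a`: a `K(x)`-vector-space basis consisting of
elements that are locally integral at `a`, such that every element of `A` that is locally
integral at `a` is a linear combination of `W` with coefficients in `K(x)_a` (rational
functions without a pole at `a`). -/
def IsLocalIntegralBasisAt {K F : Type} [Field K] [Field F] [Algebra K F]
    {m : Polynomial (RatFunc K)} {a : F} (σ : EmbFamily K F m a)
    (W : Fin m.natDegree → AdjoinRoot m) : Prop :=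
  IsKxBasis W ∧ (∀ i, LocIntegralAt σ (W i)) ∧
    ∀ f, LocIntegralAt σ f → ∃ c : Fin m.natDegree → RatFunc K,
      (∀ i, NoPoleAt a (c i)) ∧ f = ∑ i, algebraMap (RatFunc K) (AdjoinRoot m) (c i) * W i

/-! ### Helper lemmas -/

/-- Euler derivation `t d/dt` on Hahn series. -/
def heuler {F : Type} [Field F] (P : HahnSeries ℚ F) : HahnSeries ℚ F where
  coeff q := (q : F) * P.coeff q
  isPWO_support' := by
    refine P.isPWO_support.mono ?_
    intro q hq h0
    simp [Function.mem_support, h0] at hq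

theorem heuler_support {F : Type} [Field F] (P : HahnSeries ℚ F) :
    (heuler P).support ⊆ P.support := by
  intro q hq h0
  apply hq
  simp [heuler, h0]

theorem heuler_add {F : Type} [Field F] (P Q : HahnSeries ℚ F) :
    heuler (P + Q) = heuler P + heuler Q := by
  ext q
  simp [heuler, mul_add]

theorem heuler_mul {F : Type} [Field F] [CharZero F] (P Q : HahnSeries ℚ F) :
    heuler (P * Q) = P * heuler Q + Q * heuler P := by
  ext q
  rw [mul_comm Q, HahnSeries.coeff_add,
    HahnSeries.coeff_mul_right' Q.isPWO_support (heuler_support Q),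
    HahnSeries.coeff_mul_left' P.isPWO_support (heuler_support P), ← Finset.sum_add_distrib]
  show (q : F) * (P * Q).coeff q = _
  rw [HahnSeries.coeff_mul, Finset.mul_sum]
  refine Finset.sum_congr rfl ?_
  intro ij hij
  have h := (Finset.mem_antidiagonal.mp hij).2.2
  have h2 : (q : F) = (ij.1 : F) + (ij.2 : F) := by rw [← h]; push_cast; rfl
  simp only [heuler, h2]
  ring

theorem heuler_eq {F : Type} [Field F] (P : HahnSeries ℚ F) :
    heuler P = HahnSeries.single 1 1 * hderiv P := by
  ext q
  rw [HahnSeries.coeff_single_mul]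
  simp [heuler, hderiv]

theorem heuler_orderTop {F : Type} [Field F] (P : HahnSeries ℚ F) :
    P.orderTop ≤ (heuler P).orderTop := by
  rw [HahnSeries.le_orderTop_iff_forall]
  intro j hj
  simp [heuler, HahnSeries.coeff_eq_zero_of_lt_orderTop hj]

theorem hval_eq {F : Type} [Field F] (P : HahnSeries ℚ F) : hval P = P.orderTop := by
  unfold hval
  split_ifs with h
  · simp [h]
  · rw [HahnSeries.orderTop_of_ne_zero h]

/-- Series of nonnegative valuation. -/
def nnSub (F : Type) [Field F] : Subring (HahnSeries ℚ F) where
  carrier := {P | 0 ≤ P.orderTop}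
  mul_mem' := fun {a b} ha hb => by
    have h : a.orderTop + b.orderTop ≤ (a * b).orderTop := HahnSeries.orderTop_add_le_mul
    exact le_trans (add_nonneg ha hb) h
  one_mem' := by simp [HahnSeries.orderTop_one]
  add_mem' := fun {a b} ha hb => by
    have h : min a.orderTop b.orderTop ≤ (a + b).orderTop :=
      HahnSeries.min_orderTop_le_orderTop_add
    exact le_trans (le_min ha hb) h
  zero_mem' := by simp
  neg_mem' := fun {a} ha => by simpa using ha

theorem mem_nnSub {F : Type} [Field F] {P : HahnSeries ℚ F} : P ∈ nnSub F ↔ 0 ≤ P.orderTop :=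
  Iff.rfl

theorem det_mem_subring {R : Type} [CommRing R] (S : Subring R) {n : ℕ}
    (A : Matrix (Fin n) (Fin n) R) (h : ∀ i j, A i j ∈ S) : A.det ∈ S := by
  rw [Matrix.det_apply]
  refine sum_mem fun s _ => ?_
  rw [Units.smul_def]
  exact zsmul_mem (prod_mem fun i _ => h _ _) _

theorem deriv_prod {R : Type} [CommRing R] (d : R → R)
    (hmul : ∀ a b, d (a * b) = a * d b + b * d a) {ι : Type} [DecidableEq ι]
    (s : Finset ι) (f : ι → R) :
    d (∏ i ∈ s, f i) = ∑ j ∈ s, ∏ i ∈ s, Function.update f j (d (f j)) i := by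
  induction s using Finset.induction_on with
  | empty =>
    have := hmul 1 1
    simp at this
    simpa using this
  | insert a s ha ih =>
    rw [Finset.prod_insert ha, hmul, ih, Finset.sum_insert ha, add_comm, Finset.prod_insert ha,
      Finset.mul_sum]
    congr 1
    · rw [Function.update_self, mul_comm]
      congr 1
      refine Finset.prod_congr rfl fun i hi => ?_
      rw [Function.update_of_ne]
      rintro rfl; exact ha hi
    · refine Finset.sum_congr rfl fun j hj => ?_
      rw [Finset.prod_insert ha, Function.update_of_ne]
      rintro rfl; exact ha hj

theorem jacobi {R : Type} [CommRing R] (d : R → R)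
    (hadd : ∀ a b, d (a + b) = d a + d b)
    (hmul : ∀ a b, d (a * b) = a * d b + b * d a) {n : ℕ}
    (A N : Matrix (Fin n) (Fin n) R) (e : R)
    (h : ∀ i j, e * d (A i j) = ∑ k, N j k * A i k) :
    e * d A.det = N.trace * A.det := by
  let dh : R →+ R := AddMonoidHom.mk' d hadd
  have hdh : ∀ x, d x = dh x := fun _ => rfl
  have h1 : d A.det = ∑ j, (A.updateCol j (fun i => d (A i j))).det := by
    simp only [Matrix.det_apply]
    rw [Finset.sum_comm, hdh, map_sum]
    refine Finset.sum_congr rfl fun s _ => ?_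
    rw [Units.smul_def, map_zsmul, ← hdh, deriv_prod d hmul, Finset.smul_sum]
    refine Finset.sum_congr rfl fun j _ => ?_
    congr 1
    refine Finset.prod_congr rfl fun i _ => ?_
    by_cases hij : i = j
    · subst hij; simp
    · simp [hij, Matrix.updateCol_apply, Function.update_of_ne]
  rw [h1, Finset.mul_sum, Matrix.trace, Finset.sum_mul]
  refine Finset.sum_congr rfl fun j _ => ?_
  rw [← Matrix.det_updateCol_smul]
  have : (e • fun i => d (A i j)) = fun i => ∑ k, N j k • A i k := by
    funext i
    simp [h]
  rw [this, Matrix.det_updateCol_sum]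
  simp

/-- `toA` as a ring hom. -/
def toAHom {K : Type} [Field K] (m : Polynomial (RatFunc K)) : Polynomial K →+* AdjoinRoot m :=
  (algebraMap (RatFunc K) (AdjoinRoot m)).comp (algebraMap (Polynomial K) (RatFunc K))

theorem toA_eq {K : Type} [Field K] (m : Polynomial (RatFunc K)) (p : Polynomial K) :
    toA m p = toAHom m p := rfl

theorem emb_poly {K F : Type} [Field K] [Field F] [Algebra K F]
    {m : Polynomial (RatFunc K)} {a : F} (σ : EmbFamily K F m a) (i : Fin m.natDegree)
    (p : Polynomial K) : ∃ h ∈ nnSub F, σ.emb i (toA m p) =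
      HahnSeries.C (aeval a p) + HahnSeries.single 1 1 * h := by
  let ψ : Polynomial F →+* HahnSeries ℚ F :=
    Polynomial.eval₂RingHom HahnSeries.C (HahnSeries.C a + HahnSeries.single 1 1)
  have hψC : ∀ c, ψ (C c) = HahnSeries.C c := fun c => by simp [ψ]
  have hψX : ψ X = HahnSeries.C a + HahnSeries.single 1 1 := by simp [ψ]
  have h1 : (σ.emb i).comp (toAHom m) = ψ.comp (Polynomial.mapRingHom (algebraMap K F)) := by
    apply Polynomial.ringHom_ext
    · intro c
      simp only [RingHom.comp_apply, Polynomial.coe_mapRingHom, Polynomial.map_C, hψC]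
      exact σ.emb_C i c
    · simp only [RingHom.comp_apply, Polynomial.coe_mapRingHom, Polynomial.map_X, hψX]
      exact σ.emb_X i
  have h2 : σ.emb i (toA m p) = ψ (p.map (algebraMap K F)) := by
    have := congrArg (fun f => f p) h1
    simpa [toA_eq] using this
  have hmem : ∀ q, ψ q ∈ nnSub F := by
    have hC : ∀ c : F, (HahnSeries.C c : HahnSeries ℚ F) ∈ nnSub F := fun c => by
      rw [mem_nnSub]; exact HahnSeries.orderTop_single_le
    intro q
    induction q using Polynomial.induction_on' with
    | add p q hp hq => rw [map_add]; exact add_mem hp hq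
    | monomial n c =>
      rw [← Polynomial.C_mul_X_pow_eq_monomial, map_mul, map_pow, hψC, hψX]
      refine mul_mem (hC c) (pow_mem (add_mem (hC a) ?_) _)
      rw [mem_nnSub]
      refine le_trans ?_ HahnSeries.orderTop_single_le
      exact_mod_cast (zero_le_one : (0 : ℚ) ≤ 1)
  obtain ⟨q, hq⟩ := Polynomial.X_sub_C_dvd_sub_C_eval (a := a) (p := p.map (algebraMap K F))
  refine ⟨ψ q, hmem q, ?_⟩
  rw [h2, eq_add_of_sub_eq hq, map_add, map_mul, map_sub, hψC, hψC, hψX,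
    Polynomial.eval_map_algebraMap]
  ring

theorem emb_poly_mem {K F : Type} [Field K] [Field F] [Algebra K F]
    {m : Polynomial (RatFunc K)} {a : F} (σ : EmbFamily K F m a) (i : Fin m.natDegree)
    (p : Polynomial K) : σ.emb i (toA m p) ∈ nnSub F := by
  obtain ⟨h, hh, he⟩ := emb_poly σ i p
  rw [he]
  refine add_mem ?_ (mul_mem ?_ hh)
  · rw [mem_nnSub]; exact HahnSeries.orderTop_single_le
  · rw [mem_nnSub]
    refine le_trans ?_ HahnSeries.orderTop_single_le
    exact_mod_cast (zero_le_one : (0 : ℚ) ≤ 1)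

theorem emb_rat {K F : Type} [Field K] [Field F] [Algebra K F]
    {m : Polynomial (RatFunc K)} {a : F} (σ : EmbFamily K F m a) (i j : Fin m.natDegree)
    (r : RatFunc K) : σ.emb i (algebraMap _ _ r) = σ.emb j (algebraMap _ _ r) := by
  have h : (σ.emb i).comp (algebraMap (RatFunc K) (AdjoinRoot m)) =
      (σ.emb j).comp (algebraMap (RatFunc K) (AdjoinRoot m)) := by
    apply IsLocalization.ringHom_ext (nonZeroDivisors (Polynomial K))
    apply Polynomial.ringHom_ext
    · intro c
      exact (σ.emb_C i c).trans (σ.emb_C j c).symm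
    · exact (σ.emb_X i).trans (σ.emb_X j).symm
  simpa using congrArg (fun f => f r) h

theorem emb_det_ne_zero {K F : Type} [Field K] [Field F] [Algebra K F]
    {m : Polynomial (RatFunc K)} {a : F} (σ : EmbFamily K F m a)
    (W : Fin m.natDegree → AdjoinRoot m) (hW : IsKxBasis W) :
    (Matrix.of fun i j => σ.emb i (W j)).det ≠ 0 := by
  intro h0
  obtain ⟨g, hg, hg0⟩ := Matrix.exists_vecMul_eq_zero_iff.mpr h0
  apply hg
  have hall : ∀ f, ∑ i, g i * σ.emb i f = 0 := by
    intro f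
    have hf : f ∈ Submodule.span (RatFunc K) (Set.range W) := by rw [hW.2]; trivial
    induction hf using Submodule.span_induction with
    | mem x hx =>
      obtain ⟨j, rfl⟩ := hx
      simpa [Matrix.vecMul, dotProduct] using congrFun hg0 j
    | zero => simp
    | add x y _ _ hx hy => simp [mul_add, Finset.sum_add_distrib, hx, hy]
    | smul r x _ hx =>
      by_cases hn : Nonempty (Fin m.natDegree)
      · obtain ⟨j⟩ := hn
        have : ∀ i, g i * σ.emb i (r • x) =
            σ.emb j (algebraMap _ _ r) * (g i * σ.emb i x) := fun i => by
          rw [Algebra.smul_def, map_mul, emb_rat σ i j]; ring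
        simp only [this, ← Finset.mul_sum, hx, mul_zero]
      · rw [not_nonempty_iff] at hn
        simp
  have hinj : Function.Injective
      (fun i => (σ.emb i : AdjoinRoot m →* HahnSeries ℚ F)) := by
    intro i j hij
    apply σ.emb_injective
    refine RingHom.ext fun f => ?_
    exact DFunLike.congr_fun hij f
  have hli := (linearIndependent_monoidHom (AdjoinRoot m) (HahnSeries ℚ F)).comp _ hinj
  rw [Fintype.linearIndependent_iff] at hli
  funext i
  refine hli g ?_ i
  funext f
  simpa using hall f

/-- The crucial valuation lemma: a nonzero solution of a regular first order equation has
valuation zero. -/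
theorem order_zero {F : Type} [Field F] [CharZero F] (δ h τ : HahnSeries ℚ F) (c : F)
    (hδ : δ ≠ 0) (hc : c ≠ 0) (hh : h ∈ nnSub F) (hτ : τ ∈ nnSub F)
    (heq : (HahnSeries.C c + HahnSeries.single 1 1 * h) * heuler δ =
      HahnSeries.single 1 1 * τ * δ) : δ.orderTop = 0 := by
  obtain ⟨v, hv⟩ := WithTop.ne_top_iff_exists.mp (HahnSeries.orderTop_ne_top.mpr hδ)
  have key : ∀ x y : HahnSeries ℚ F, x ∈ nnSub F → δ.orderTop ≤ y.orderTop →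
      (HahnSeries.single 1 1 * x * y).coeff v = 0 := by
    intro x y hx hy
    apply HahnSeries.coeff_eq_zero_of_lt_orderTop
    have h1 : ((1 : ℚ) : WithTop ℚ) ≤ (HahnSeries.single (1 : ℚ) (1 : F)).orderTop :=
      HahnSeries.orderTop_single_le
    have h2 : ((1 : ℚ) : WithTop ℚ) + 0 + (v : WithTop ℚ) ≤
        (HahnSeries.single 1 1 * x * y).orderTop :=
      le_trans (add_le_add (le_trans (add_le_add h1 (mem_nnSub.mp hx)) HahnSeries.orderTop_add_le_mul)
        (hv ▸ hy)) HahnSeries.orderTop_add_le_mul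
    refine lt_of_lt_of_le ?_ h2
    rw [add_zero]
    have : v < 1 + v := by linarith
    exact_mod_cast this
  have h3 := congrArg (fun s => s.coeff v) heq
  simp only [add_mul, HahnSeries.coeff_add] at h3
  rw [key h _ hh (heuler_orderTop δ), key τ _ hτ le_rfl, add_zero, HahnSeries.C_apply,
    HahnSeries.coeff_single_zero_mul] at h3
  have h4 : δ.coeff v ≠ 0 := HahnSeries.coeff_orderTop_ne hv.symm
  have h5 : v = 0 := by
    simpa [heuler, hc, h4] using h3
  rw [← hv, h5]; rfl

theorem det_T_ne {K : Type} [Field K] [CharZero K]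
    (m : Polynomial (RatFunc K))
    (D : AdjoinRoot m → AdjoinRoot m)
    (a : AlgebraicClosure K)
    (σ : EmbFamily K (AlgebraicClosure K) m a)
    (hσ : IsDiffFamily D σ)
    (W U : Fin m.natDegree → AdjoinRoot m)
    (e : Polynomial K) (M : Matrix (Fin m.natDegree) (Fin m.natDegree) (Polynomial K))
    (hWb : IsKxBasis W) (hrel : DerivRel D W e M)
    (hU : ∀ i, LocIntegralAt σ (U i))
    (T : Matrix (Fin m.natDegree) (Fin m.natDegree) (Polynomial K))
    (hWT : ∀ i, W i = ∑ j, toA m (T i j) * U j)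
    (he : aeval a e ≠ 0) : aeval a T.det ≠ 0 := by
  intro hT
  have : CharZero (AlgebraicClosure K) := charZero_of_injective_algebraMap
    (algebraMap K (AlgebraicClosure K)).injective
  by_cases hn : Nonempty (Fin m.natDegree)
  swap
  · rw [not_nonempty_iff] at hn
    simp [Matrix.det_isEmpty] at hT
  obtain ⟨o⟩ := hn
  have hpoly : ∀ i p, σ.emb i (toA m p) = σ.emb o (toA m p) := fun i p => emb_rat σ i o _
  set Ω : Matrix (Fin m.natDegree) (Fin m.natDegree) (HahnSeries ℚ (AlgebraicClosure K)) :=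
    Matrix.of fun i j => σ.emb i (W j) with hΩ
  set V : Matrix (Fin m.natDegree) (Fin m.natDegree) (HahnSeries ℚ (AlgebraicClosure K)) :=
    Matrix.of fun i j => σ.emb i (U j) with hV
  have hne : Ω.det ≠ 0 := emb_det_ne_zero σ W hWb
  let φ : Polynomial K →+* HahnSeries ℚ (AlgebraicClosure K) := (σ.emb o).comp (toAHom m)
  have hφ : ∀ p, φ p = σ.emb o (toA m p) := fun _ => rfl
  let t : HahnSeries ℚ (AlgebraicClosure K) := HahnSeries.single 1 1
  have hj := jacobi heuler heuler_add heuler_mul Ω (t • M.map φ) (φ e) (by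
    intro i j
    have h1 := congrArg (σ.emb i) (hrel j)
    rw [map_mul, map_sum, hσ, hpoly] at h1
    show φ e * heuler (σ.emb i (W j)) = _
    rw [heuler_eq, mul_left_comm, hφ, h1, Finset.mul_sum]
    refine Finset.sum_congr rfl fun k _ => ?_
    rw [map_mul, hpoly]
    simp [hΩ, hφ, t, mul_assoc])
  rw [Matrix.trace_smul, smul_eq_mul] at hj
  obtain ⟨h, hh, hhe⟩ := emb_poly σ o e
  rw [hφ, hhe] at hj
  have h0 := order_zero Ω.det h _ _ hne he hh
    (by
      rw [Matrix.trace]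
      exact sum_mem fun i _ => emb_poly_mem σ o _) hj
  have hfac : Ω = V * (T.map φ).transpose := by
    ext1 i j
    rw [Matrix.mul_apply]
    simp only [hΩ, hV, Matrix.of_apply, Matrix.transpose_apply, Matrix.map_apply]
    rw [hWT, map_sum]
    refine Finset.sum_congr rfl fun k _ => ?_
    rw [map_mul, hpoly, hφ, mul_comm]
  have hVm : V.det ∈ nnSub _ := det_mem_subring _ _ fun i j => by
    rw [mem_nnSub, ← hval_eq]; exact hU j i
  have hdet : Ω.det = V.det * φ T.det := by
    rw [hfac, Matrix.det_mul, Matrix.det_transpose, RingHom.map_det]; rfl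
  obtain ⟨k, hk, hke⟩ := emb_poly σ o T.det
  rw [hφ, hke, hT, map_zero, zero_add] at hdet
  have h1 : ((1 : ℚ) : WithTop ℚ) ≤
      (HahnSeries.single (1 : ℚ) (1 : AlgebraicClosure K)).orderTop :=
    HahnSeries.orderTop_single_le
  have h2 : (0 : WithTop ℚ) + (((1 : ℚ) : WithTop ℚ) + 0) ≤ Ω.det.orderTop := by
    rw [hdet]
    exact le_trans (add_le_add (mem_nnSub.mp hVm) (le_trans (add_le_add h1 (mem_nnSub.mp hk))
      HahnSeries.orderTop_add_le_mul)) HahnSeries.orderTop_add_le_mul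
  rw [h0, zero_add, add_zero] at h2
  have h3 : (1 : ℚ) ≤ 0 := by exact_mod_cast h2
  linarith

/-- Change of basis: `e_u M T = e (e_u T′ + T M_u)`. -/
theorem change_basis {K : Type} [Field K]
    (m : Polynomial (RatFunc K))
    (D : AdjoinRoot m → AdjoinRoot m) (hD : IsDerivationOnA m D)
    (W U : Fin m.natDegree → AdjoinRoot m)
    (e eu : Polynomial K) (M Mu : Matrix (Fin m.natDegree) (Fin m.natDegree) (Polynomial K))
    (hrel : DerivRel D W e M)
    (hU : LinearIndependent (RatFunc K) U) (hrelU : DerivRel D U eu Mu)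
    (T : Matrix (Fin m.natDegree) (Fin m.natDegree) (Polynomial K))
    (hWT : ∀ i, W i = ∑ j, toA m (T i j) * U j) :
    eu • (M * T) = e • (eu • T.map Polynomial.derivative + T * Mu) := by
  let φ := toAHom m
  let dh : AdjoinRoot m →+ AdjoinRoot m := AddMonoidHom.mk' D hD.map_add
  have hdh : ∀ x, D x = dh x := fun _ => rfl
  have hli : ∀ P Q : Fin m.natDegree → Polynomial K,
      ∑ j, φ (P j) * U j = ∑ j, φ (Q j) * U j → ∀ j, P j = Q j := by
    intro P Q h j
    rw [Fintype.linearIndependent_iff] at hU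
    have := hU (fun j => algebraMap _ (RatFunc K) (P j) - algebraMap _ (RatFunc K) (Q j)) (by
      simp only [Algebra.smul_def, map_sub, sub_mul, Finset.sum_sub_distrib]
      exact sub_eq_zero.mpr h) j
    exact RatFunc.algebraMap_injective K (sub_eq_zero.mp this)
  ext1 i j
  refine hli (fun j => (eu • (M * T)) i j)
    (fun j => (e • (eu • T.map Polynomial.derivative + T * Mu)) i j) ?_ j
  have e1 : ∑ j, φ ((eu • (M * T)) i j) * U j = φ eu * (φ e * D (W i)) := by
    have h := hrel i
    simp only [toA_eq] at h
    rw [h]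
    simp only [hWT, toA_eq, Matrix.smul_apply, Matrix.mul_apply, smul_eq_mul, map_mul, map_sum,
      Finset.mul_sum, Finset.sum_mul]
    rw [Finset.sum_comm]
    refine Finset.sum_congr rfl fun k _ => Finset.sum_congr rfl fun l _ => ?_
    simp only [φ]; ring
  have e2 : ∑ j, φ ((e • (eu • T.map Polynomial.derivative + T * Mu)) i j) * U j =
      φ e * (φ eu * D (W i)) := by
    have h3 : φ eu * D (W i) = ∑ k, (φ eu * (U k * φ (Polynomial.derivative (T i k))) +
        φ (T i k) * ∑ l, φ (Mu k l) * U l) := by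
      rw [hWT, hdh, map_sum, Finset.mul_sum]
      refine Finset.sum_congr rfl fun k _ => ?_
      rw [← hdh, hD.leibniz, hD.map_poly, mul_add, add_comm]
      congr 1
      rw [mul_left_comm]
      exact congrArg _ (hrelU k)
    rw [h3]
    simp only [Matrix.smul_apply, Matrix.add_apply, Matrix.map_apply, Matrix.mul_apply,
      smul_eq_mul, map_mul, map_add, map_sum, Finset.sum_add_distrib, mul_add, add_mul,
      Finset.mul_sum, Finset.sum_mul]
    congr 1
    · refine Finset.sum_congr rfl fun k _ => ?_
      ring
    · rw [Finset.sum_comm]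
      refine Finset.sum_congr rfl fun k _ => Finset.sum_congr rfl fun l _ => ?_
      ring
  rw [e1, e2]; ring

theorem dvd_arg {K : Type} [Field K] {n : ℕ} (a : AlgebraicClosure K)
    (e f : Polynomial K) (M N : Matrix (Fin n) (Fin n) (Polynomial K))
    (hg : GcdOne e M) (h : f • M = e • N) (hf : aeval a f ≠ 0) : aeval a e ≠ 0 := by
  intro he
  have hint : IsIntegral K a := Algebra.IsIntegral.isIntegral a
  have hp := minpoly.prime hint
  have hpe : minpoly K a ∣ e := minpoly.dvd K a he
  refine hp.not_isUnit (hg _ hpe ?_)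
  intro i j
  have h1 := congrFun (congrFun h i) j
  simp only [Matrix.smul_apply, smul_eq_mul] at h1
  have h2 : minpoly K a ∣ f * M i j := h1 ▸ hpe.mul_right _
  rcases hp.dvd_or_dvd h2 with h3 | h3
  · exact absurd ((minpoly.dvd_iff).mp h3) hf
  · exact h3

/-- Let `W` be a suitable basis and `U` an integral basis of `A` with `W = TU`
for `T ∈ K[x]^{n×n}`. Let `e ∈ K[x]` (squarefree) with `eW′ = MW`, `gcd(e, entries of M) = 1`,
and `e_u ∈ K[x]` with `e_u U′ = M_u U`, `gcd(e_u, entries of M_u) = 1`. Then the set of roots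
of `e` in `K̄` equals the union of the set of roots of `det(T)` and the set of roots
of `e_u`. -/
theorem roots_of_e_eq_union {K : Type} [Field K] [CharZero K]
    (m : Polynomial (RatFunc K)) [Fact (Irreducible m)]
    (D : AdjoinRoot m → AdjoinRoot m) (hD : IsDerivationOnA m D)
    (σ : ∀ a : AlgebraicClosure K, EmbFamily K (AlgebraicClosure K) m a)
    (hσ : ∀ a, IsDiffFamily D (σ a))
    (W U : Fin m.natDegree → AdjoinRoot m)
    (e eu : Polynomial K) (M Mu : Matrix (Fin m.natDegree) (Fin m.natDegree) (Polynomial K))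
    -- `W` is a suitable basis:
    (hWb : IsKxBasis W) (hrel : DerivRel D W e M) (hgcd : GcdOne e M)
    (hsqf : Squarefree e) (hWint : ∀ i, IntegralElem σ (W i))
    -- `U` is an integral basis, with `e_u U′ = M_u U`:
    (hU : IsIntegralBasis σ U) (hrelU : DerivRel D U eu Mu) (hgcdU : GcdOne eu Mu)
    -- `W = TU`:
    (T : Matrix (Fin m.natDegree) (Fin m.natDegree) (Polynomial K))
    (hWT : ∀ i, W i = ∑ j, toA m (T i j) * U j) :
    ∀ a : AlgebraicClosure K,
      Polynomial.aeval a e = 0 ↔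
        (Polynomial.aeval a T.det = 0 ∨ Polynomial.aeval a eu = 0) := by
  intro a
  have hcb := change_basis m D hD W U e eu M Mu hrel hU.1.1 hrelU T hWT
  constructor
  · intro he
    by_contra hcon
    rw [not_or] at hcon
    refine dvd_arg a e (eu * T.det) M
      ((eu • T.map Polynomial.derivative + T * Mu) * T.adjugate) hgcd ?_ ?_ he
    · have h := congrArg (fun X => X * T.adjugate) hcb
      simp only [Matrix.smul_mul, Matrix.mul_assoc, Matrix.mul_adjugate, Matrix.mul_smul,
        Matrix.mul_one] at h
      rw [mul_smul, h]
    · rw [map_mul]; exact mul_ne_zero hcon.2 hcon.1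
  · intro hor
    by_contra he
    have hT : aeval a T.det ≠ 0 := det_T_ne m D a (σ a) (hσ a) W U e M hWb hrel
      (fun i => hU.2.1 i a) T hWT he
    rcases hor with h | h
    · exact hT h
    · refine dvd_arg a eu (e * T.det) Mu
        (T.adjugate * (M * T - e • T.map Polynomial.derivative)) hgcdU ?_ ?_ h
      · have h2 : e • (T * Mu) = eu • (M * T - e • T.map Polynomial.derivative) := by
          rw [smul_sub, hcb, smul_add, smul_comm e eu]
          abel
        have h := congrArg (fun X => T.adjugate * X) h2
        simp only [Matrix.mul_smul] at h
        rw [← Matrix.mul_assoc, Matrix.adjugate_mul, Matrix.smul_mul, Matrix.one_mul] at h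
        rw [mul_smul, h]
      · rw [map_mul]; exact mul_ne_zero he hT
end
end

section
/- The function field A always possesses a K(x)-vector-space basis V that is suitable at infinity, i.e., such that for a ∈ K[x] and B ∈ K[x]^{n×n} with aV′ = BV one has deg_x(B) < deg_x(a). -/
noncomputable section
open scoped Classical
open Polynomial

/-- `V` is suitable at infinity: whenever `a ∈ K[x]` and `B ∈ K[x]^{n×n}` satisfy
`aV′ = BV` (with `a ≠ 0`), one has `deg_x(B) < deg_x(a)`. -/
def SuitableAtInfinity {K : Type} [Field K] {m : Polynomial (RatFunc K)}
    (D : AdjoinRoot m → AdjoinRoot m) (V : Fin m.natDegree → AdjoinRoot m) : Prop :=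
  ∀ (a : Polynomial K) (B : Matrix (Fin m.natDegree) (Fin m.natDegree) (Polynomial K)),
    a ≠ 0 → DerivRel D V a B → ∀ i j, (B i j).degree < a.degree

open WithZero in
theorem val_core {K L : Type*} [Field K] [Field L] [CharZero K] [Algebra K L]
    (v : Valuation L (WithZero (Multiplicative ℤ))) (θ : Derivation K L L)
    (hK : ∀ k : K, k ≠ 0 → v (algebraMap K L k) = 1)
    (s : L) (hs0 : s ≠ 0) (hs : v s < 1) (hθs : θ s = -s)
    (halg : ∀ f, v f ≤ 1 → ∃ p : K[X], p ≠ 0 ∧ v (aeval f p) < 1)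
    (n : ℕ) (hn : ∀ f, v f ≤ 1 → v (θ f) ≤ exp (n : ℤ)) :
    ∀ f, v f ≤ 1 → v (θ f) ≤ 1 := by
  have hK' : ∀ k : K, v (algebraMap K L k) ≤ 1 := by
    intro k
    by_cases h : k = 0
    · simp [h]
    · exact (hK k h).le
  have hpol : ∀ (p : K[X]) (f : L), v f ≤ 1 → v (aeval f p) ≤ 1 := by
    intro p f hf
    rw [aeval_eq_sum_range]
    refine v.map_sum_le fun i _ => ?_
    rw [Algebra.smul_def, map_mul, map_pow]
    exact mul_le_one' (hK' _) (pow_le_one' hf _)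
  induction n with
  | zero => simpa using hn
  | succ n ih =>
    apply ih
    intro f hf
    classical
    -- minimal degree
    have hex : ∃ d : ℕ, ∃ p : K[X], p.natDegree = d ∧ p ≠ 0 ∧ v (aeval f p) < 1 := by
      obtain ⟨p, hp, hv⟩ := halg f hf
      exact ⟨_, p, rfl, hp, hv⟩
    obtain ⟨p, hpd, hp0, hpv⟩ := Nat.find_spec hex
    have hmin := fun d => Nat.find_min hex (m := d)
    rw [← hpd] at hmin
    have hdeg : p.natDegree ≠ 0 := by
      intro h
      rw [natDegree_eq_zero] at h
      obtain ⟨k, rfl⟩ := h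
      rw [aeval_C, hK k (by simpa using hp0)] at hpv
      exact lt_irrefl _ hpv
    have hder : derivative p ≠ 0 := by
      intro h
      exact hdeg (derivative_eq_zero.1 h)
    have hder1 : v (aeval f (derivative p)) = 1 := by
      refine le_antisymm (hpol _ _ hf) ?_
      by_contra hlt
      rw [not_le] at hlt
      exact hmin _ (natDegree_derivative_lt hdeg) ⟨_, rfl, hder, hlt⟩
    set g := aeval f p with hg
    have hθg : θ g = aeval f (derivative p) * θ f := by
      rw [hg, Derivation.map_aeval, smul_eq_mul]
    have hvθ : v (θ f) = v (θ g) := by rw [hθg, map_mul, hder1, one_mul]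
    rw [hvθ]
    by_cases hg0 : g = 0
    · rw [hg0, map_zero, map_zero]; exact zero_le
    have hex : ∀ z : L, z ≠ 0 → v z < 1 → ∃ a : ℕ, a ≠ 0 ∧ v z = exp (-(a : ℤ)) := by
      intro z hz hz1
      have hvz : v z ≠ 0 := by simpa using hz
      have h1 : log (v z) < 0 := by
        rw [← log_one]; exact (log_lt_log hvz one_ne_zero).2 hz1
      refine ⟨(-log (v z)).toNat, by omega, ?_⟩
      rw [Int.toNat_of_nonneg (by omega), neg_neg, exp_log hvz]
    obtain ⟨a, ha, hva⟩ := hex g hg0 hpv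
    obtain ⟨e, he, hve⟩ := hex s hs0 hs
    have hsa : s ^ a ≠ 0 := pow_ne_zero _ hs0
    set h := g ^ e / s ^ a with hh
    have hgh : g ^ e = h * s ^ a := by rw [hh, div_mul_cancel₀ _ hsa]
    have hveq : v (g ^ e) = v (s ^ a) := by
      rw [map_pow, map_pow, hva, hve, ← exp_nsmul, ← exp_nsmul]
      congr 1; simp; ring
    have hvh : v h = 1 := by
      rw [hh, map_div₀, hveq, div_self]; simp [hs0]
    have key : (e : L) * g ^ e * θ g = g * s ^ a * (θ h - a * h) := by
      have h1 := congrArg θ hgh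
      rw [Derivation.leibniz, Derivation.leibniz_pow, Derivation.leibniz_pow, hθs] at h1
      obtain ⟨e, rfl⟩ := Nat.exists_eq_succ_of_ne_zero he
      obtain ⟨a, rfl⟩ := Nat.exists_eq_succ_of_ne_zero ha
      simp only [smul_eq_mul, nsmul_eq_mul, Nat.succ_sub_one, Nat.succ_eq_add_one] at h1 ⊢
      linear_combination g * h1
    have hve1 : v (e : L) = 1 := by
      have := hK (e : K) (by exact_mod_cast he)
      simpa using this
    have hva1 : v (a : L) ≤ 1 := by simpa using hK' (a : K)
    have key2 := congrArg v key
    rw [map_mul, map_mul, map_mul, map_mul, hve1, one_mul, hveq, mul_comm (v g), mul_assoc] at key2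
    have hvsa : v (s ^ a) ≠ 0 := by simp [hs0]
    have key3 := mul_left_cancel₀ hvsa key2
    rw [key3]
    have hb : v (θ h - a * h) ≤ exp ((n + 1 : ℕ) : ℤ) := by
      refine v.map_sub_le (hn h hvh.le) ?_
      rw [map_mul, hvh, mul_one]
      refine hva1.trans ?_
      rw [← exp_zero, exp_le_exp]; positivity
    calc v g * v (θ h - a * h) ≤ exp (-1) * exp ((n + 1 : ℕ) : ℤ) := by
          refine mul_le_mul' ?_ hb
          rw [hva, exp_le_exp]; omega
      _ = exp (n : ℤ) := by rw [← exp_add]; congr 1; push_cast; ring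

theorem alg_core {K F L : Type*} [Field K] [Field F] [Field L] [Algebra K F] [Algebra F L]
    [Algebra K L] [IsScalarTower K F L] 
    (w : Valuation F (WithZero (Multiplicative ℤ)))
    (v : Valuation L (WithZero (Multiplicative ℤ)))
    (hvw : ∀ o : F, w o < 1 → v (algebraMap F L o) < 1)
    (hres : ∀ o : F, w o ≤ 1 → ∃ k : K, w (o - algebraMap K F k) < 1)
    (f : L) (hf : v f ≤ 1) (hfa : IsAlgebraic F f) :
    ∃ p : K[X], p ≠ 0 ∧ v (aeval f p) < 1 := by
  obtain ⟨q, hq0, hq⟩ := hfa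
  obtain ⟨i0, hi0, hmax⟩ := q.support.exists_max_image (fun i => w (q.coeff i))
    (by simpa using hq0)
  set c := q.coeff i0 with hc
  have hc0 : c ≠ 0 := by simpa using hi0
  have hle : ∀ i, w (c⁻¹ * q.coeff i) ≤ 1 := by
    intro i
    by_cases hi : i ∈ q.support
    · rw [map_mul, map_inv₀]
      have hwc : 0 < w c := by rw [zero_lt_iff]; simpa using hc0
      rw [inv_mul_le_iff₀ hwc, mul_one]
      exact hmax i hi
    · simp only [mem_support_iff, not_not] at hi; simp [hi]
  choose k hk using fun i => hres _ (hle i)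
  let p : K[X] := ∑ i ∈ Finset.range (q.natDegree + 1), monomial i (k i)
  have hpc : ∀ i ∈ Finset.range (q.natDegree + 1), p.coeff i = k i := by
    intro i hi
    simp only [p, finsetSum_coeff, coeff_monomial]
    simp only [Finset.sum_ite_eq', hi, if_true]
  refine ⟨p, ?_, ?_⟩
  · intro hp
    have h1 := hpc i0 (by rw [Finset.mem_range]; have := le_natDegree_of_mem_supp _ hi0; omega)
    have h2 := hk i0
    rw [← h1, hp, ← hc, inv_mul_cancel₀ hc0] at h2
    simp at h2
  · have h1 : aeval f p = - ∑ i ∈ Finset.range (q.natDegree + 1),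
        algebraMap F L (c⁻¹ * q.coeff i - algebraMap K F (k i)) * f ^ i := by
      have h2 : ∑ i ∈ Finset.range (q.natDegree + 1),
          algebraMap F L (c⁻¹ * q.coeff i) * f ^ i = 0 := by
        rw [aeval_eq_sum_range] at hq
        simp only [map_mul, mul_assoc]
        rw [← Finset.mul_sum]
        simp only [Algebra.smul_def] at hq
        rw [hq, mul_zero]
      simp only [map_sub, sub_mul, Finset.sum_sub_distrib]
      rw [h2]
      simp only [p, map_sum, aeval_monomial, ← IsScalarTower.algebraMap_apply]
      simp
    rw [h1, Valuation.map_neg]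
    refine v.map_sum_lt one_ne_zero fun i _ => ?_
    rw [map_mul, map_pow]
    exact mul_lt_one_of_lt_of_le (hvw _ (hk i)) (pow_le_one' hf _)

theorem stable_core {K F L : Type*} [Field K] [Field F] [Field L] [CharZero K] [Algebra K F]
    [Algebra F L] [Algebra K L] [IsScalarTower K F L] [FiniteDimensional F L]
    (w : Valuation F (WithZero (Multiplicative ℤ)))
    [IsDiscreteValuationRing w.valuationSubring]
    (hwK : ∀ k : K, k ≠ 0 → w (algebraMap K F k) = 1)
    (hres : ∀ o : F, w o ≤ 1 → ∃ k : K, w (o - algebraMap K F k) < 1)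
    (θ : Derivation K L L)
    (hθO : ∀ o : F, w o ≤ 1 → ∃ o' : F, w o' ≤ 1 ∧ θ (algebraMap F L o) = algebraMap F L o')
    (s : F) (hs0 : s ≠ 0) (hs : w s < 1) (hθs : θ (algebraMap F L s) = - algebraMap F L s) :
    ∀ b ∈ integralClosure w.valuationSubring L,
      θ b ∈ integralClosure w.valuationSubring L := by
  classical
  have : CharZero F := charZero_of_injective_algebraMap (algebraMap K F).injective
  let O := w.valuationSubring
  let B := integralClosure O L
  have : IsFractionRing B L := IsIntegralClosure.isFractionRing_of_finite_extension O F L B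
  have : IsDedekindDomain B := IsIntegralClosure.isDedekindDomain O F L B
  have : Module.Finite O B := IsIntegralClosure.finite O F L B
  have : Algebra.IsIntegral O B := IsIntegralClosure.isIntegral_algebra O L
  intro b hb
  suffices h : θ b ∈ (algebraMap B L).range by
    obtain ⟨c, hc⟩ := h
    rw [← hc]; exact c.2
  apply IsDedekindDomain.HeightOneSpectrum.mem_integers_of_valuation_le_one
  intro P
  set v := P.valuation L with hv
  have hvB : ∀ c ∈ B, v c ≤ 1 := fun c hc => P.valuation_le_one (K := L) ⟨c, hc⟩
  have hvO : ∀ o : F, w o ≤ 1 → v (algebraMap F L o) ≤ 1 := by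
    intro o ho
    apply hvB
    exact isIntegral_algebraMap (R := O) (A := L) (x := ⟨o, ho⟩)
  have hvm : ∀ o : F, w o < 1 → v (algebraMap F L o) < 1 := by
    intro o ho
    have hPm : P.asIdeal.IsMaximal := P.isMaximal
    have h1 : (P.asIdeal.comap (algebraMap O B)).IsMaximal :=
      Ideal.isMaximal_comap_of_isIntegral_of_isMaximal P.asIdeal
    have h2 := IsLocalRing.eq_maximalIdeal h1
    have h3 : (⟨o, ho.le⟩ : O) ∈ IsLocalRing.maximalIdeal O := by
      rw [IsLocalRing.mem_maximalIdeal, mem_nonunits_iff]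
      intro hu
      obtain ⟨u, hu⟩ := hu.exists_right_inv
      have := congrArg (fun z : O => w (z : F)) hu
      simp only [MulMemClass.coe_mul, map_mul, OneMemClass.coe_one, map_one] at this
      have hu1 : w (u : F) ≤ 1 := u.2
      exact absurd this (mul_lt_one_of_lt_of_le ho hu1).ne
    rw [← h2, Ideal.mem_comap] at h3
    exact (P.valuation_lt_one_iff_mem (K := L) _).2 h3
  have hvO1 : ∀ k : K, k ≠ 0 → v (algebraMap K L k) = 1 := by
    intro k hk
    rw [IsScalarTower.algebraMap_apply K F L]
    have h1 := hvO _ (hwK k hk).le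
    have h2 := hvO (algebraMap K F k)⁻¹ (by rw [map_inv₀, hwK k hk, inv_one])
    refine le_antisymm h1 ?_
    rw [map_inv₀, map_inv₀] at h2
    have hne : 0 < v (algebraMap F L (algebraMap K F k)) := by
      rw [zero_lt_iff]; simpa using hk
    exact (inv_le_one₀ hne).1 h2
  -- boundedness
  have hbd : ∃ n : ℕ, ∀ c ∈ B, v (θ c) ≤ WithZero.exp (n : ℤ) := by
    obtain ⟨S, hS⟩ := (Module.Finite.fg_top : (⊤ : Submodule O B).FG)
    have h1 : ∃ n : ℕ, ∀ c ∈ S, v (θ (c : L)) ≤ WithZero.exp (n : ℤ) := by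
      refine ⟨S.sup (fun c => (WithZero.log (v (θ (c : L)))).toNat), fun c hc => ?_⟩
      refine WithZero.le_exp_of_log_le ?_
      have := Finset.le_sup (f := fun c : B => (WithZero.log (v (θ (c : L)))).toNat) hc
      omega
    obtain ⟨n, hn⟩ := h1
    refine ⟨n, ?_⟩
    suffices h : ∀ c : B, v (θ (c : L)) ≤ WithZero.exp (n : ℤ) from fun c hc => h ⟨c, hc⟩
    intro c
    have hc : c ∈ Submodule.span O (S : Set B) := by rw [hS]; trivial
    induction hc using Submodule.span_induction with
    | mem x hx => exact hn x hx
    | zero => simp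
    | add x y _ _ hx hy =>
      rw [Subalgebra.coe_add, map_add]
      exact v.map_add_le hx hy
    | smul o x _ hx =>
      have : ((o • x : B) : L) = algebraMap F L (o : F) * (x : L) := by
        rw [Subalgebra.coe_smul, Algebra.smul_def]; rfl
      rw [this, Derivation.leibniz, smul_eq_mul, smul_eq_mul]
      obtain ⟨o', ho', he⟩ := hθO (o : F) o.2
      refine v.map_add_le ?_ ?_
      · rw [map_mul]
        exact mul_le_of_le_one_of_le (hvO _ o.2) hx
      · rw [he, map_mul]
        refine (mul_le_one' (hvB _ x.2) (hvO _ ho')).trans ?_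
        rw [← WithZero.exp_zero, WithZero.exp_le_exp]; positivity
  obtain ⟨n, hn⟩ := hbd
  refine val_core v θ hvO1 (algebraMap F L s) (by simpa using hs0) (hvm s hs) hθs ?_ n ?_ b
    (hvB b hb)
  · intro f hf
    exact alg_core w v hvm hres f hf (Algebra.IsAlgebraic.isAlgebraic f)
  · intro f hf
    obtain ⟨c, d, hcd⟩ := P.exists_primeCompl_mul_eq_of_integer (K := L) f hf
    have hd1 : v (algebraMap B L d) = 1 :=
      (P.valuation_eq_one_iff_notMem).2 d.2
    have hc := hn _ c.2
    have hd := hn _ (d : B).2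
    have h1 := congrArg θ hcd
    rw [Derivation.leibniz, smul_eq_mul, smul_eq_mul] at h1
    have h2 : algebraMap B L d * θ f = θ (algebraMap B L c) - f * θ (algebraMap B L d) := by
      rw [← h1]; ring
    have h3 := congrArg v h2
    rw [map_mul, hd1, one_mul] at h3
    rw [h3]
    refine v.map_sub_le hc ?_
    rw [map_mul]
    exact mul_le_of_le_one_of_le hf hd

theorem infty_le_one_iff {K : Type*} [Field K] [DecidableEq (RatFunc K)] (p q : K[X]) (hq : q ≠ 0) :
    RatFunc.inftyValuation K (algebraMap K[X] (RatFunc K) p / algebraMap K[X] (RatFunc K) q) ≤ 1 ↔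
      p.degree ≤ q.degree := by
  by_cases hp : p = 0
  · simp [hp]
  rw [map_div₀, RatFunc.inftyValuation_apply, RatFunc.inftyValuation_apply,
    RatFunc.inftyValuation.polynomial _ hp, RatFunc.inftyValuation.polynomial _ hq,
    div_le_one₀ (by simp), WithZero.exp_le_exp, degree_eq_natDegree hp, degree_eq_natDegree hq]
  norm_cast

theorem infty_lt_one_iff {K : Type*} [Field K] [DecidableEq (RatFunc K)] (p q : K[X]) (hq : q ≠ 0) :
    RatFunc.inftyValuation K (algebraMap K[X] (RatFunc K) p / algebraMap K[X] (RatFunc K) q) < 1 ↔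
      p.degree < q.degree := by
  by_cases hp : p = 0
  · simp [hp, bot_lt_iff_ne_bot, hq]
  rw [map_div₀, RatFunc.inftyValuation_apply, RatFunc.inftyValuation_apply,
    RatFunc.inftyValuation.polynomial _ hp, RatFunc.inftyValuation.polynomial _ hq,
    div_lt_one₀ (by simp), WithZero.exp_lt_exp, degree_eq_natDegree hp, degree_eq_natDegree hq]
  norm_cast

theorem infty_res {K : Type*} [Field K] [DecidableEq (RatFunc K)] (o : RatFunc K)
    (ho : RatFunc.inftyValuation K o ≤ 1) :
    ∃ k : K, RatFunc.inftyValuation K (o - algebraMap K (RatFunc K) k) < 1 := by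
  have hq := o.denom_ne_zero
  have hqm := o.monic_denom
  rw [← RatFunc.num_div_denom o, infty_le_one_iff _ _ hq] at ho
  refine ⟨o.num.coeff o.denom.natDegree, ?_⟩
  set k := o.num.coeff o.denom.natDegree with hk
  have h1 : o - algebraMap K (RatFunc K) k =
      algebraMap K[X] (RatFunc K) (o.num - C k * o.denom) / algebraMap K[X] (RatFunc K) o.denom := by
    have hq' : algebraMap K[X] (RatFunc K) o.denom ≠ 0 := by simpa using hq
    conv_lhs => rw [← RatFunc.num_div_denom o]
    rw [map_sub, map_mul, sub_div, mul_div_cancel_right₀ _ hq']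
    rfl
  rw [h1, infty_lt_one_iff _ _ hq, degree_eq_natDegree hq, degree_lt_iff_coeff_zero]
  intro j hj
  have hdeg : o.num.natDegree ≤ o.denom.natDegree := natDegree_le_natDegree ho
  rcases hj.eq_or_lt with rfl | hj
  · rw [coeff_sub, coeff_C_mul, hqm.coeff_natDegree, hk]; simp
  · rw [coeff_sub, coeff_C_mul, coeff_eq_zero_of_natDegree_lt hj,
      coeff_eq_zero_of_natDegree_lt (hdeg.trans_lt hj)]; simp

theorem degree_X_mul_derivative_le {K : Type*} [Field K] (p : K[X]) :
    (X * derivative p).degree ≤ p.degree := by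
  by_cases hp : derivative p = 0
  · simp [hp]
  have h0 : p ≠ 0 := by rintro rfl; simp at hp
  have h1 : p.natDegree ≠ 0 := by
    intro h; rw [natDegree_eq_zero] at h; obtain ⟨c, rfl⟩ := h; simp at hp
  have h2 := natDegree_derivative_lt h1
  rw [mul_comm, degree_mul_X, degree_eq_natDegree hp, degree_eq_natDegree h0]
  exact_mod_cast h2

/-- The function field `A` always possesses a `K(x)`-vector-space basis `V`
that is suitable at infinity, i.e., such that for `a ∈ K[x]` and `B ∈ K[x]^{n×n}` with
`aV′ = BV` one has `deg_x(B) < deg_x(a)`. -/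
theorem exists_basis_suitableAtInfinity {K : Type} [Field K] [CharZero K]
    (m : Polynomial (RatFunc K)) [Fact (Irreducible m)]
    (D : AdjoinRoot m → AdjoinRoot m) (hD : IsDerivationOnA m D) :
    ∃ V : Fin m.natDegree → AdjoinRoot m, IsKxBasis V ∧ SuitableAtInfinity D V := by
  have hm0 : m ≠ 0 := (Fact.out : Irreducible m).ne_zero
  let w := RatFunc.inftyValuation K
  let O := w.valuationSubring
  have hdvr : IsDiscreteValuationRing O := inferInstance
  let pb := AdjoinRoot.powerBasis hm0
  have hfd : FiniteDimensional (RatFunc K) (AdjoinRoot m) := pb.finite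
  have hfr : Module.finrank (RatFunc K) (AdjoinRoot m) = m.natDegree := pb.finrank
  let B := integralClosure O (AdjoinRoot m)
  have : CharZero (RatFunc K) := charZero_of_injective_algebraMap (algebraMap K (RatFunc K)).injective
  have hfin : Module.Finite O B := IsIntegralClosure.finite O (RatFunc K) (AdjoinRoot m) B
  have hfree : Module.Free O B := IsIntegralClosure.module_free O (RatFunc K) (AdjoinRoot m) B
  have hrank : Module.finrank O B = m.natDegree := by
    rw [← hfr]; exact IsIntegralClosure.rank O (RatFunc K) (AdjoinRoot m) B
  have hloc : IsLocalization (Algebra.algebraMapSubmonoid B (nonZeroDivisors O)) (AdjoinRoot m) :=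
    IsIntegralClosure.isLocalization O (RatFunc K) (AdjoinRoot m) B
  let b0 : Module.Basis (Fin m.natDegree) O B := Module.finBasisOfFinrankEq O B hrank
  let b := b0.localizationLocalization (RatFunc K) (nonZeroDivisors O) (AdjoinRoot m)
  -- the derivation
  have hconst : ∀ k : K, algebraMap K (AdjoinRoot m) k = toA m (C k) := fun k => rfl
  let δ : Derivation K (AdjoinRoot m) (AdjoinRoot m) := Derivation.mk'
    { toFun := D
      map_add' := hD.map_add
      map_smul' := by
        intro k f
        rw [Algebra.smul_def, hD.leibniz, hconst, hD.map_poly, derivative_C]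
        simp [Algebra.smul_def, hconst, toA] }
    (fun f g => hD.leibniz f g)
  have hδ : ∀ f, δ f = D f := fun f => rfl
  let θ : Derivation K (AdjoinRoot m) (AdjoinRoot m) := toA m X • δ
  have hθ : ∀ f, θ f = toA m X * D f := fun f => rfl
  have hθp : ∀ p : K[X], θ (toA m p) = toA m (X * derivative p) := by
    intro p
    rw [hθ, hD.map_poly]; simp [toA]
  have hstab : ∀ f ∈ B, θ f ∈ B := by
    refine stable_core (F := RatFunc K) w ?_ infty_res θ ?_ (RatFunc.X)⁻¹ ?_ ?_ ?_
    · intro k hk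
      exact RatFunc.inftyValuation.C K hk
    · intro o ho
      have hq := o.denom_ne_zero
      set p := o.num with hp
      set q := o.denom with hq'
      have ho' : o = algebraMap K[X] (RatFunc K) p / algebraMap K[X] (RatFunc K) q :=
        (RatFunc.num_div_denom o).symm
      have hd : p.degree ≤ q.degree := by
        rw [ho'] at ho
        exact (infty_le_one_iff _ _ hq).1 ho
      refine ⟨algebraMap K[X] (RatFunc K) (q * (X * derivative p) - p * (X * derivative q)) /
        algebraMap K[X] (RatFunc K) (q ^ 2), ?_, ?_⟩
      · refine (infty_le_one_iff _ _ (pow_ne_zero _ hq)).2 ?_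
        rw [pow_two, degree_mul]
        refine (degree_sub_le _ _).trans (max_le ?_ ?_)
        · rw [degree_mul]
          exact add_le_add le_rfl ((degree_X_mul_derivative_le p).trans hd)
        · rw [degree_mul]
          exact add_le_add hd (degree_X_mul_derivative_le q)
      · have h1 : algebraMap (RatFunc K) (AdjoinRoot m) o = toA m p / toA m q := by
          rw [ho', map_div₀]; rfl
        rw [h1, Derivation.leibniz_div, hθp, hθp, map_div₀]
        simp only [toA, map_sub, map_mul, map_pow, smul_eq_mul, inv_pow]
        rw [mul_comm, div_eq_mul_inv]
    · exact inv_ne_zero RatFunc.X_ne_zero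
    · change RatFunc.inftyValuation K _ < 1
      rw [map_inv₀, RatFunc.inftyValuation.X, ← WithZero.exp_neg, ← WithZero.exp_zero,
        WithZero.exp_lt_exp]
      norm_num
    · have h1 : algebraMap (RatFunc K) (AdjoinRoot m) (RatFunc.X)⁻¹ = (toA m X)⁻¹ := by
        rw [map_inv₀, ← RatFunc.algebraMap_X]; rfl
      have hX : toA m X ≠ 0 := by simp [toA, RatFunc.X_ne_zero]
      rw [h1, Derivation.leibniz_inv, hθp]
      simp only [derivative_X, mul_one, smul_eq_mul]
      field_simp
  have hbapp : ∀ i, b i = (b0 i : AdjoinRoot m) := fun i =>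
    Module.Basis.localizationLocalization_apply _ _ _ _ i
  refine ⟨b, ⟨b.linearIndependent, b.span_eq⟩, ?_⟩
  intro a M ha hrel i j
  have ha' : algebraMap K[X] (RatFunc K) a ≠ 0 := by simpa using ha
  have haA : toA m a ≠ 0 := by simp [toA, ha]
  -- θ (b i) as a combination
  have h1 : θ (b i) = ∑ j, (algebraMap K[X] (RatFunc K) (X * M i j) /
      algebraMap K[X] (RatFunc K) a) • b j := by
    apply mul_left_cancel₀ haA
    rw [hθ, mul_left_comm, hrel i, Finset.mul_sum, Finset.mul_sum]
    refine Finset.sum_congr rfl fun j _ => ?_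
    rw [Algebra.smul_def, map_div₀]
    change _ = toA m a * (toA m (X * M i j) / toA m a * b j)
    have : toA m (X * M i j) = toA m X * toA m (M i j) := by simp [toA]
    rw [this]
    field_simp
  have h2 : b.repr (θ (b i)) j = algebraMap K[X] (RatFunc K) (X * M i j) /
      algebraMap K[X] (RatFunc K) a := by
    rw [h1, b.repr_sum_self]
  have hmem : θ (b i) ∈ B := hstab _ (by rw [hbapp]; exact (b0 i).2)
  have h3 : b.repr (θ (b i)) j = algebraMap O (RatFunc K) (b0.repr ⟨θ (b i), hmem⟩ j) :=
    Module.Basis.localizationLocalization_repr_algebraMap (RatFunc K) (nonZeroDivisors O)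
      (AdjoinRoot m) b0 ⟨θ (b i), hmem⟩ j
  have h4 : w (b.repr (θ (b i)) j) ≤ 1 := by
    rw [h3]; exact (b0.repr ⟨θ (b i), hmem⟩ j).2
  rw [h2] at h4
  have h5 := (infty_le_one_iff _ _ ha).1 h4
  by_cases hM : M i j = 0
  · rw [hM, degree_zero, bot_lt_iff_ne_bot]; simpa using ha
  refine lt_of_lt_of_le ?_ h5
  rw [mul_comm, degree_mul_X, degree_eq_natDegree hM]
  norm_cast
  exact Nat.lt_succ_self _
end
end
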